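/- arXiv:2502.08315 — 2 statements merged into one kernel-verified Lean document; each statement's English description precedes it below -/
import Mathlib

section
/- Let X be a real Hilbert space, Γ a nonempty set, and let {S(x)}_{x∈Γ} and {U(x)}_{x∈Γ} be families of closed subspaces of X (no continuity assumed) such that S(x) ∩ U(x) = {0} and S(x) + U(x) = X for all x ∈ Γ. Assume there exists M > 0 such that for every x ∈ Γ and every nonzero v ∈ S(x) one has ‖P_{U(x)} v‖ ≤ M ‖v − P_{U(x)} v‖, where P_{U(x)} is the orthogonal projection onto U(x) (i.e. the inclination of S(x) relative to U(x) ⊕ U(x)^⊥ = X is at most M). Then there exists M' > 0 such that for every x ∈ Γ the oblique projection π_x of X onto S(x) along U(x) (the unique bounded idempotent operator with range S(x) and kernel U(x)) satisfies ‖π_x‖ + ‖I − π_x‖ ≤ M'. -/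
open Filter

/-- `P` is the orthogonal projection of `X` onto the subspace `E`. -/
def IsOrthoProjOn {X : Type*} [NormedAddCommGroup X] [InnerProductSpace ℝ X]
    (E : Submodule ℝ X) (P : X →L[ℝ] X) : Prop :=
  ∀ x : X, P x ∈ E ∧ x - P x ∈ Eᗮ

/-!
Write `P` for the orthogonal projection onto `U` and `π` for the projection onto `S` along `U`.
Since `z - π z ∈ U`, the vectors `z` and `v = π z` have the same component orthogonal to `U`:
`v - P v = z - P z`. The inclination bound then controls the rest of `v` by that component,
`‖P v‖ ≤ M ‖z - P z‖`. By Pythagoras `‖v‖ ≤ √(1 + M²) ‖z‖`, and since `z - v = P z - P v`,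
Cauchy–Schwarz gives the same bound for `‖z - v‖`. So `‖π‖` and `‖I - π‖` are both at most
`√(1 + M²)`, a constant that depends on `M` only.
-/

namespace IsOrthoProjOn

variable {X : Type*} [NormedAddCommGroup X] [InnerProductSpace ℝ X] {E : Submodule ℝ X}
  {P : X →L[ℝ] X}

theorem hasOrthogonalProjection (hP : IsOrthoProjOn E P) : E.HasOrthogonalProjection :=
  ⟨fun v ↦ ⟨P v, hP v⟩⟩

theorem eq_starProjection [E.HasOrthogonalProjection] (hP : IsOrthoProjOn E P) :
    P = E.starProjection :=
  ContinuousLinearMap.ext fun v ↦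
    (Submodule.eq_starProjection_of_mem_orthogonal (hP v).1 (hP v).2).symm

end IsOrthoProjOn

section

variable {𝕜 E : Type*} [RCLike 𝕜] [NormedAddCommGroup E] [InnerProductSpace 𝕜 E]
  {U : Submodule 𝕜 E} [U.HasOrthogonalProjection] {v z : E} {M : ℝ}

variable (U v) in
theorem norm_sq_eq_add_norm_sq_sub_starProjection :
    ‖v‖ ^ 2 = ‖U.starProjection v‖ ^ 2 + ‖v - U.starProjection v‖ ^ 2 := by
  rw [← Submodule.starProjection_orthogonal_val]
  exact Submodule.norm_sq_eq_add_norm_sq_starProjection v U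

theorem starProjection_sub_starProjection_of_sub_mem (hzv : z - v ∈ U) :
    U.starProjection z - U.starProjection v = z - v := by
  rw [← map_sub, Submodule.starProjection_eq_self_iff.mpr hzv]

theorem sub_starProjection_eq_of_sub_mem (hzv : z - v ∈ U) :
    v - U.starProjection v = z - U.starProjection z :=
  (sub_eq_sub_iff_sub_eq_sub.mp (starProjection_sub_starProjection_of_sub_mem hzv).symm).symm

theorem norm_le_sqrt_mul_norm_of_sub_mem (hzv : z - v ∈ U)
    (hv : ‖U.starProjection v‖ ≤ M * ‖v - U.starProjection v‖) :
    ‖v‖ ≤ √(1 + M ^ 2) * ‖z‖ := by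
  rw [← sq_le_sq₀ (norm_nonneg v) (by positivity), mul_pow, Real.sq_sqrt (by positivity)]
  have hsq : ‖U.starProjection v‖ ^ 2 ≤ (M * ‖v - U.starProjection v‖) ^ 2 := by gcongr
  calc ‖v‖ ^ 2 = ‖U.starProjection v‖ ^ 2 + ‖v - U.starProjection v‖ ^ 2 :=
        norm_sq_eq_add_norm_sq_sub_starProjection U v
    _ ≤ (1 + M ^ 2) * ‖v - U.starProjection v‖ ^ 2 := by linarith
    _ = (1 + M ^ 2) * ‖z - U.starProjection z‖ ^ 2 := by
        rw [sub_starProjection_eq_of_sub_mem hzv]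
    _ ≤ (1 + M ^ 2) * ‖z‖ ^ 2 := by
        gcongr
        rw [← Submodule.starProjection_orthogonal_val]
        exact Uᗮ.norm_starProjection_apply_le z

theorem norm_sub_le_sqrt_mul_norm_of_sub_mem (hzv : z - v ∈ U)
    (hv : ‖U.starProjection v‖ ≤ M * ‖v - U.starProjection v‖) :
    ‖z - v‖ ≤ √(1 + M ^ 2) * ‖z‖ := by
  have htri : ‖z - v‖ ≤ ‖U.starProjection z‖ + M * ‖z - U.starProjection z‖ :=
    calc ‖z - v‖ = ‖U.starProjection z - U.starProjection v‖ := by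
          rw [starProjection_sub_starProjection_of_sub_mem hzv]
      _ ≤ ‖U.starProjection z‖ + ‖U.starProjection v‖ := norm_sub_le _ _
      _ ≤ ‖U.starProjection z‖ + M * ‖z - U.starProjection z‖ := by
          rw [← sub_starProjection_eq_of_sub_mem hzv]
          gcongr
  rw [← sq_le_sq₀ (norm_nonneg _) (by positivity), mul_pow, Real.sq_sqrt (by positivity)]
  calc ‖z - v‖ ^ 2 ≤ (‖U.starProjection z‖ + M * ‖z - U.starProjection z‖) ^ 2 := by gcongr
    -- Cauchy–Schwarz for the vectors `(1, M)` and `(‖P z‖, ‖z - P z‖)` of the plane.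
    _ ≤ (1 + M ^ 2) * (‖U.starProjection z‖ ^ 2 + ‖z - U.starProjection z‖ ^ 2) := by
        linarith [sq_nonneg (M * ‖U.starProjection z‖ - ‖z - U.starProjection z‖)]
    _ = (1 + M ^ 2) * ‖z‖ ^ 2 := by rw [norm_sq_eq_add_norm_sq_sub_starProjection U z]

theorem stmt9_general {S : Submodule 𝕜 E}
    (hbound : ∀ v ∈ S, v ≠ 0 → ‖U.starProjection v‖ ≤ M * ‖v - U.starProjection v‖)
    {π : E →L[𝕜] E} (hidem : π.comp π = π) (hrange : LinearMap.range (π : E →ₗ[𝕜] E) = S)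
    (hker : LinearMap.ker (π : E →ₗ[𝕜] E) = U) :
    ‖π‖ + ‖ContinuousLinearMap.id 𝕜 E - π‖ ≤ 2 * √(1 + M ^ 2) := by
  have hsub (z : E) : z - π z ∈ U := by
    rw [← hker, LinearMap.mem_ker, ContinuousLinearMap.coe_coe, map_sub, sub_eq_zero]
    exact (DFunLike.congr_fun hidem z).symm
  have hincl (z : E) :
      ‖U.starProjection (π z)‖ ≤ M * ‖π z - U.starProjection (π z)‖ := by
    rcases eq_or_ne (π z) 0 with h0 | h0
    · simp [h0]
    · exact hbound (π z) (hrange ▸ LinearMap.mem_range_self _ z) h0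
  have hπ : ‖π‖ ≤ √(1 + M ^ 2) := π.opNorm_le_bound (by positivity) fun z ↦
    norm_le_sqrt_mul_norm_of_sub_mem (hsub z) (hincl z)
  have hid_sub : ‖ContinuousLinearMap.id 𝕜 E - π‖ ≤ √(1 + M ^ 2) :=
    ContinuousLinearMap.opNorm_le_bound _ (by positivity) fun z ↦
      norm_sub_le_sqrt_mul_norm_of_sub_mem (hsub z) (hincl z)
  linarith

end

/-- If `{S(x)}`, `{U(x)}` are families of closed complementary subspaces of a real
Hilbert space indexed by a nonempty set `Γ`, and the inclination of `S(x)` relative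
to `U(x) ⊕ U(x)ᗮ = X` is uniformly bounded by `M`, then the norms of the oblique
projections onto `S(x)` along `U(x)` are uniformly bounded. -/
theorem stmt9 {X : Type*} [NormedAddCommGroup X] [InnerProductSpace ℝ X] [CompleteSpace X]
    {Γ : Type*} [Nonempty Γ]
    (S U : Γ → Submodule ℝ X)
    (hSclosed : ∀ x, IsClosed ((S x : Submodule ℝ X) : Set X))
    (hUclosed : ∀ x, IsClosed ((U x : Submodule ℝ X) : Set X))
    (hinf : ∀ x, S x ⊓ U x = ⊥) (hsup : ∀ x, S x ⊔ U x = ⊤)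
    (PU : Γ → X →L[ℝ] X) (hPU : ∀ x, IsOrthoProjOn (U x) (PU x))
    (M : ℝ) (hM : 0 < M)
    (hbound : ∀ x : Γ, ∀ v ∈ S x, v ≠ 0 → ‖PU x v‖ ≤ M * ‖v - PU x v‖) :
    ∃ M' > 0, ∀ x : Γ, ∀ π : X →L[ℝ] X,
      π.comp π = π → LinearMap.range (π : X →ₗ[ℝ] X) = S x → LinearMap.ker (π : X →ₗ[ℝ] X) = U x →
      ‖π‖ + ‖ContinuousLinearMap.id ℝ X - π‖ ≤ M' := by
  refine ⟨2 * √(1 + M ^ 2), by positivity, fun x π ↦ ?_⟩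
  have := (hPU x).hasOrthogonalProjection
  exact stmt9_general ((hPU x).eq_starProjection ▸ hbound x)
end

section
/- Let (M,d) be a metric space, A ⊆ M a nonempty set, U ⊆ M, and T : M → M a map with T(U) ⊆ U that is Lipschitz on U with constant L₁ < 1 (d(T x, T y) ≤ L₁ d(x,y) for all x, y ∈ U). Assume there exist C > 1 and γ > 0 such that for every n ∈ ℕ and every x ∈ U, inf_{a∈A} d(T^n x, a) ≤ C e^{−γ n}. Then there exists L > 0 such that for every δ with 0 < δ < 1 and every δ-pseudo-orbit x : ℤ → U of T contained in U, one has inf_{a∈A} d(x_n, a) ≤ L δ for all n ∈ ℤ. -/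
/- A contraction forgets the past: along a `δ`-pseudo-orbit the errors add up to at most a geometric
series, so the true orbit of `x (n - k)` is within `δ / (1 - K)` of `x n` after `k` steps, uniformly
in `k`. Started that far back, the true orbit has meanwhile come as close to `A` as one likes. -/

open Filter Finset Metric Set
open scoped NNReal Topology

lemma eventually_mapsTo_thickening_of_infDist_le {M α β : Type*} [PseudoMetricSpace M]
    {A : Set M} {U : Set α} {l : Filter β} {f : β → α → M} {u : β → ℝ} (hA : A.Nonempty)
    (hu : Tendsto u l (𝓝 0)) (hf : ∀ i, ∀ y ∈ U, infDist (f i y) A ≤ u i)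
    {ε : ℝ} (hε : 0 < ε) :
    ∀ᶠ i in l, MapsTo (f i) U (thickening ε A) := by
  filter_upwards [hu.eventually_lt_const hε] with i hi y hy
  exact (mem_thickening_iff_infDist_lt hA).2 ((hf i y hy).trans_lt hi)

lemma tendsto_const_mul_exp_neg_mul_natCast (C : ℝ) {γ : ℝ} (hγ : 0 < γ) :
    Tendsto (fun n : ℕ ↦ C * Real.exp (-γ * n)) atTop (𝓝 0) := by
  have exponent_atBot : Tendsto (fun n : ℕ ↦ -γ * n) atTop atBot :=
    tendsto_natCast_atTop_atTop.const_mul_atTop_of_neg (neg_neg_of_pos hγ)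
  simpa only [mul_zero, Function.comp_apply] using
    (Real.tendsto_exp_atBot.comp exponent_atBot).const_mul C

section PseudoOrbit

variable {M ι : Type*} [PseudoMetricSpace M] {T : M → M} {A U : Set M} {K : ℝ≥0} {δ : ℝ} {x : ι → M}

/-- A `δ`-pseudo-orbit of `T`: a sequence that follows `T` up to an error `δ` at each step. The
index type is left open, so that `ℕ` gives forward, `ℤ` two-sided and `ZMod p` periodic
pseudo-orbits. -/
def IsPseudoOrbit [Add ι] [One ι] (T : M → M) (δ : ℝ) (x : ι → M) : Prop :=
  ∀ n, dist (T (x n)) (x (n + 1)) ≤ δ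

lemma IsPseudoOrbit.nonneg [Add ι] [One ι] (hx : IsPseudoOrbit T δ x) : 0 ≤ δ :=
  dist_nonneg.trans (hx 1)

lemma IsPseudoOrbit.dist_iterate_le_geom_sum_mul [AddMonoidWithOne ι] (hx : IsPseudoOrbit T δ x)
    (hT : LipschitzOnWith K T U) (hTU : MapsTo T U U) (hxU : ∀ n, x n ∈ U) (m : ι) (k : ℕ) :
    dist (T^[k] (x m)) (x (m + k)) ≤ (∑ i ∈ range k, (K : ℝ) ^ i) * δ := by
  induction k with
  | zero => simp
  | succ k ih =>
    calc dist (T^[k + 1] (x m)) (x (m + (k + 1 : ℕ)))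
        = dist (T (T^[k] (x m))) (x (m + k + 1)) := by
          rw [Function.iterate_succ_apply', Nat.cast_succ, add_assoc]
      _ ≤ dist (T (T^[k] (x m))) (T (x (m + k))) + dist (T (x (m + k))) (x (m + k + 1)) :=
          dist_triangle _ _ _
      _ ≤ K * ((∑ i ∈ range k, (K : ℝ) ^ i) * δ) + δ := by
          gcongr
          · exact (hT.dist_le_mul _ (hTU.iterate k (hxU m)) _ (hxU _)).trans (by gcongr)
          · exact hx _
      _ = (∑ i ∈ range (k + 1), (K : ℝ) ^ i) * δ := by rw [geom_sum_succ]; ring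

lemma IsPseudoOrbit.dist_iterate_le [AddMonoidWithOne ι] (hx : IsPseudoOrbit T δ x)
    (hK : K < 1) (hT : LipschitzOnWith K T U) (hTU : MapsTo T U U) (hxU : ∀ n, x n ∈ U)
    (m : ι) (k : ℕ) :
    dist (T^[k] (x m)) (x (m + k)) ≤ (1 - K : ℝ)⁻¹ * δ := by
  have geom_sum_le : ∑ i ∈ range k, (K : ℝ) ^ i ≤ (1 - K : ℝ)⁻¹ :=
    ((summable_geometric_of_lt_one K.2 hK).sum_le_tsum _ fun i _ ↦ pow_nonneg K.2 i).trans_eq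
      (tsum_geometric_of_lt_one K.2 hK)
  exact (hx.dist_iterate_le_geom_sum_mul hT hTU hxU m k).trans
    (mul_le_mul_of_nonneg_right geom_sum_le hx.nonneg)

lemma IsPseudoOrbit.mem_cthickening [AddGroupWithOne ι] (hx : IsPseudoOrbit T δ x)
    (hK : K < 1) (hT : LipschitzOnWith K T U) (hTU : MapsTo T U U)
    (hattr : ∀ ε > 0, ∃ k, MapsTo T^[k] U (thickening ε A)) (hxU : ∀ n, x n ∈ U) (n : ι) :
    x n ∈ cthickening ((1 - K : ℝ)⁻¹ * δ) A := by
  rw [cthickening_eq_iInter_cthickening, mem_iInter₂]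
  intro r hr
  obtain ⟨k, hk⟩ := hattr (r - (1 - K : ℝ)⁻¹ * δ) (sub_pos.2 hr)
  obtain ⟨a, haA, ha⟩ := mem_thickening_iff.1 (hk (hxU (n - k)))
  have orbit_near : dist (T^[k] (x (n - k))) (x n) ≤ (1 - K : ℝ)⁻¹ * δ := by
    simpa only [sub_add_cancel] using hx.dist_iterate_le hK hT hTU hxU (n - k) k
  refine mem_cthickening_of_dist_le _ a _ _ haA ?_
  linarith [dist_triangle_left (x n) a (T^[k] (x (n - k)))]

theorem stmt13_general [AddGroupWithOne ι] (hK : K < 1) (hT : LipschitzOnWith K T U)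
    (hTU : MapsTo T U U) (hattr : ∀ ε > 0, ∃ k, MapsTo T^[k] U (thickening ε A))
    (hxU : ∀ n, x n ∈ U) (hx : IsPseudoOrbit T δ x) (n : ι) :
    infDist (x n) A ≤ (1 - K : ℝ)⁻¹ * δ :=
  have bound_nonneg : 0 ≤ (1 - K : ℝ)⁻¹ * δ :=
    mul_nonneg (inv_nonneg.2 (sub_nonneg.2 (mod_cast hK.le))) hx.nonneg
  ENNReal.toReal_le_of_le_ofReal bound_nonneg (hx.mem_cthickening hK hT hTU hattr hxU n)

end PseudoOrbit

/-- If `A` attracts the positively invariant set `U` exponentially and `T` is Lipschitz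
on `U` with constant `L₁ < 1` (a contraction), then every `δ`-pseudo-orbit of `T` in `U`
stays within `L δ` of `A`. -/
theorem stmt13 {M : Type*} [MetricSpace M] (T : M → M)
    (A U : Set M) (hA : A.Nonempty) (hTU : Set.MapsTo T U U)
    (L₁ : ℝ) (hL₁ : L₁ < 1)
    (hLip : ∀ x ∈ U, ∀ y ∈ U, dist (T x) (T y) ≤ L₁ * dist x y)
    (C γ : ℝ) (hC : 1 < C) (hγ : 0 < γ)
    (hattr : ∀ n : ℕ, ∀ x ∈ U, Metric.infDist (T^[n] x) A ≤ C * Real.exp (-γ * n)) :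
    ∃ L > 0, ∀ δ : ℝ, 0 < δ → δ < 1 → ∀ x : ℤ → M,
      (∀ n : ℤ, x n ∈ U) → (∀ n : ℤ, dist (T (x n)) (x (n + 1)) ≤ δ) →
      ∀ n : ℤ, Metric.infDist (x n) A ≤ L * δ := by
  have hK : L₁.toNNReal < 1 := Real.toNNReal_lt_one.2 hL₁
  exact ⟨(1 - L₁.toNNReal : ℝ)⁻¹, inv_pos.2 (sub_pos.2 (mod_cast hK)), fun _ _ _ _ ↦
    stmt13_general hK (.of_dist_le' hLip) hTU fun _ hε ↦
      (eventually_mapsTo_thickening_of_infDist_le hA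
        (tendsto_const_mul_exp_neg_mul_natCast C hγ) hattr hε).exists⟩
end
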